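/- arXiv:2010.16371 — 2 statements merged into one kernel-verified Lean document; each statement's English description precedes it below -/
import Mathlib

section
/- Let M be a real symmetric 2×2 matrix, let Ω be a 2×2 complex symmetric matrix with Im Ω = M, let c ∈ ℝ² with cᵀMc < 0, and let v ∈ ℂ². Set Λ := Ω - (i/Q_M(c))·(Mc)(Mc)ᵀ. Assume Im(Q_Ω(v)) > 0 and Re(-2i·Q_Λ(v)) > 0. Then -∫₀^∞ E(cᵀMv·√t / √(-½cᵀMc))·exp(2πi·Q_Ω(v)·t) dt = cᵀMv / (4πi·√(-Q_M(c))·Q_Ω(v)·(-2i·Q_Λ(v))^{1/2}), where √(-½cᵀMc) = √(-Q_M(c)) is the positive real square root and (-2i·Q_Λ(v))^{1/2} denotes the principal branch of the complex square root. -/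
open Matrix

/-- `E(z) := ∫₀^z e^{-πu²} du`, realised as `∫₀¹ z·exp(-π t² z²) dt`. -/
noncomputable def E (z : ℂ) : ℂ :=
  ∫ t in (0 : ℝ)..1, z * Complex.exp (-(Real.pi : ℂ) * (t : ℂ) ^ 2 * z ^ 2)

/-- `Q_A(v) := ½ vᵀAv` for a 2×2 complex matrix `A` and `v ∈ ℂ²`. -/
noncomputable def Qc (A : Matrix (Fin 2) (Fin 2) ℂ) (v : Fin 2 → ℂ) : ℂ :=
  (1 / 2) * (v ⬝ᵥ A.mulVec v)

/-!
Writing `a = cᵀMv / √(-Q_M(c))` and `s = -2i Q_Ω(v)`, the rank-one correction defining `Λ` is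
exactly what makes `-2i Q_Λ(v) = s + a²`, so the claim is the Laplace transform
`∫₀^∞ E(a√t) e^{-πst} dt = a / (2πs (s + a²)^{1/2})`. Substituting `t = x²` and integrating by parts
moves the derivative onto `x ↦ E(ax)`, which leaves the half-line Gaussian integral with parameter
`s + a²`. Everything converges because `E(ax) e^{-πsx²}` averages `ax e^{-π(s + θ²a²)x²}` over
`θ ∈ [0, 1]`, and `s + θ²a²` stays on the segment from `s` to `s + a²`, inside the right half-plane.
-/

open Complex MeasureTheory Set Filter Topology
open scoped Real

section Gaussian

lemma hasDerivAt_cexp_neg_mul_sq (b : ℂ) (x : ℝ) :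
    HasDerivAt (fun x : ℝ => cexp (-b * (x : ℂ) ^ 2))
      (-b * (2 * (x : ℂ)) * cexp (-b * (x : ℂ) ^ 2)) x := by
  have hsq : HasDerivAt (fun x : ℝ => (x : ℂ) ^ 2) (2 * (x : ℂ)) x := by
    simpa using (hasDerivAt_id x).ofReal_comp.fun_pow 2
  exact (hsq.const_mul (-b)).cexp.congr_deriv (mul_comm _ _)

lemma tendsto_mul_exp_neg_mul_sq_atTop {b : ℝ} (hb : 0 < b) :
    Tendsto (fun x : ℝ => x * Real.exp (-b * x ^ 2)) atTop (𝓝 0) := by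
  have hexp : Tendsto (fun x : ℝ => Real.exp (-(1 / 2) * x)) atTop (𝓝 0) :=
    Real.tendsto_exp_atBot.comp (tendsto_id.const_mul_atTop_of_neg (by norm_num))
  simpa using (rpow_mul_exp_neg_mul_sq_isLittleO_exp_neg hb 1).trans_tendsto hexp

lemma integral_Ioi_cexp_neg_pi_mul_sq {w : ℂ} (hw : 0 < w.re) :
    ∫ x in Ioi (0 : ℝ), cexp (-(π * w) * (x : ℂ) ^ 2) = 1 / (2 * w ^ (1 / 2 : ℂ)) := by
  have hπw : 0 < ((π : ℂ) * w).re := by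
    rw [re_ofReal_mul]
    positivity
  have harg : w.arg ≠ π := fun h => (arg_eq_pi_iff.1 h).1.not_gt hw
  have hdiv : (π : ℂ) / (π * w) = w⁻¹ := by
    rw [div_mul_cancel_left₀ (ofReal_ne_zero.2 Real.pi_ne_zero)]
  rw [integral_gaussian_complex_Ioi hπw, hdiv, inv_cpow _ _ harg]
  ring

end Gaussian

section ErrorFunction

@[simp]
lemma E_zero : E 0 = 0 := by
  simp [E]

lemma E_mul_ofReal (a : ℂ) (x : ℝ) :
    E (a * x) = ∫ y in (0 : ℝ)..x, a * cexp (-(π * a ^ 2) * (y : ℂ) ^ 2) := by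
  have hscale := intervalIntegral.smul_integral_comp_mul_left (a := 0) (b := 1)
    (fun y : ℝ => a * cexp (-(π * a ^ 2) * (y : ℂ) ^ 2)) x
  rw [mul_zero, mul_one] at hscale
  rw [← hscale, E, ← intervalIntegral.integral_smul]
  congr 1 with t
  rw [real_smul, ofReal_mul]
  ring_nf

lemma hasDerivAt_E_mul_ofReal (a : ℂ) (x : ℝ) :
    HasDerivAt (fun x : ℝ => E (a * x)) (a * cexp (-(π * a ^ 2) * (x : ℂ) ^ 2)) x := by
  have hcont : Continuous fun y : ℝ => a * cexp (-(π * a ^ 2) * (y : ℂ) ^ 2) := by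
    fun_prop
  simpa only [E_mul_ofReal] using hcont.integral_hasStrictDerivAt 0 x |>.hasDerivAt

lemma continuous_E_mul_ofReal (a : ℂ) : Continuous fun x : ℝ => E (a * x) :=
  continuous_iff_continuousAt.2 fun x => (hasDerivAt_E_mul_ofReal a x).continuousAt

lemma norm_E_mul_cexp_le {a s : ℂ} {m x : ℝ} (hs : m ≤ s.re) (hsa : m ≤ (s + a ^ 2).re)
    (hx : 0 ≤ x) :
    ‖E (a * x) * cexp (-(π * s) * (x : ℂ) ^ 2)‖ ≤ ‖a‖ * (x * Real.exp (-(π * m) * x ^ 2)) := by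
  have hintegrand : ∀ θ ∈ uIoc (0 : ℝ) 1,
      ‖a * x * cexp (-π * (θ : ℂ) ^ 2 * (a * x) ^ 2) * cexp (-(π * s) * (x : ℂ) ^ 2)‖
        ≤ ‖a‖ * (x * Real.exp (-(π * m) * x ^ 2)) := by
    intro θ hθ
    rw [uIoc_of_le zero_le_one] at hθ
    have hre : m ≤ (s + (θ ^ 2 : ℝ) • a ^ 2).re :=
      (convex_halfSpace_re_ge m).add_smul_mem hs hsa
        ⟨sq_nonneg θ, pow_le_one₀ hθ.1.le hθ.2⟩
    have hexp : cexp (-π * (θ : ℂ) ^ 2 * (a * x) ^ 2) * cexp (-(π * s) * (x : ℂ) ^ 2)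
        = cexp (-(π * (s + (θ ^ 2 : ℝ) • a ^ 2)) * (x : ℂ) ^ 2) := by
      rw [← Complex.exp_add, real_smul, ofReal_pow]
      ring_nf
    rw [mul_assoc, hexp, norm_mul, norm_mul, norm_cexp_neg_mul_sq, norm_real,
      Real.norm_of_nonneg hx, re_ofReal_mul, mul_assoc]
    gcongr
  rw [E, ← intervalIntegral.integral_mul_const]
  simpa using intervalIntegral.norm_integral_le_of_norm_le_const hintegrand

variable {a s : ℂ}

lemma tendsto_E_mul_cexp_atTop (hs : 0 < s.re) (hsa : 0 < (s + a ^ 2).re) :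
    Tendsto (fun x : ℝ => E (a * x) * cexp (-(π * s) * (x : ℂ) ^ 2)) atTop (𝓝 0) := by
  have hbound := (tendsto_mul_exp_neg_mul_sq_atTop
    (mul_pos Real.pi_pos (lt_min hs hsa))).const_mul ‖a‖
  rw [mul_zero] at hbound
  refine squeeze_zero_norm' ?_ hbound
  filter_upwards [eventually_ge_atTop 0] with x hx
  exact norm_E_mul_cexp_le (min_le_left _ _) (min_le_right _ _) hx

lemma integrableOn_Ioi_mul_E_mul_cexp (hs : 0 < s.re) (hsa : 0 < (s + a ^ 2).re) :
    IntegrableOn (fun x : ℝ => x * (E (a * x) * cexp (-(π * s) * (x : ℂ) ^ 2))) (Ioi 0) := by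
  have hbound := ((integrable_rpow_mul_exp_neg_mul_sq
    (mul_pos Real.pi_pos (lt_min hs hsa)) (by norm_num : (-1 : ℝ) < 2)).const_mul ‖a‖).integrableOn
      (s := Ioi 0)
  refine hbound.mono' ?_ ((ae_restrict_mem measurableSet_Ioi).mono fun x (hx : 0 < x) => ?_)
  · have := continuous_E_mul_ofReal a
    exact Continuous.aestronglyMeasurable (by fun_prop)
  · calc ‖x * (E (a * x) * cexp (-(π * s) * (x : ℂ) ^ 2))‖
        = x * ‖E (a * x) * cexp (-(π * s) * (x : ℂ) ^ 2)‖ := by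
          rw [norm_mul, norm_real, Real.norm_of_nonneg hx.le]
      _ ≤ x * (‖a‖ * (x * Real.exp (-(π * min s.re (s + a ^ 2).re) * x ^ 2))) := by
          gcongr
          exact norm_E_mul_cexp_le (min_le_left _ _) (min_le_right _ _) hx.le
      _ = ‖a‖ * (x ^ (2 : ℝ) * Real.exp (-(π * min s.re (s + a ^ 2).re) * x ^ 2)) := by
          rw [Real.rpow_two]
          ring

lemma integral_Ioi_E_mul_deriv_cexp (hs : 0 < s.re) (hsa : 0 < (s + a ^ 2).re) :
    ∫ x in Ioi (0 : ℝ), E (a * x) * (-(π * s) * (2 * (x : ℂ)) * cexp (-(π * s) * (x : ℂ) ^ 2))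
      = -(a * ∫ x in Ioi (0 : ℝ), cexp (-(π * (s + a ^ 2)) * (x : ℂ) ^ 2)) := by
  have hderiv_mul : (fun x : ℝ => a * cexp (-(π * a ^ 2) * (x : ℂ) ^ 2)) *
        (fun x : ℝ => cexp (-(π * s) * (x : ℂ) ^ 2))
      = fun x : ℝ => a * cexp (-(π * (s + a ^ 2)) * (x : ℂ) ^ 2) := by
    ext x
    rw [Pi.mul_apply, mul_assoc, ← Complex.exp_add]
    ring_nf
  have hint_deriv_mul : IntegrableOn
      (fun x : ℝ => a * cexp (-(π * (s + a ^ 2)) * (x : ℂ) ^ 2)) (Ioi 0) := by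
    refine ((integrable_cexp_neg_mul_sq ?_).const_mul a).integrableOn
    rw [re_ofReal_mul]
    positivity
  have hint_mul_deriv : IntegrableOn ((fun x : ℝ => E (a * x)) *
      fun x : ℝ => -(π * s) * (2 * (x : ℂ)) * cexp (-(π * s) * (x : ℂ) ^ 2)) (Ioi 0) := by
    refine IntegrableOn.congr_fun
      ((integrableOn_Ioi_mul_E_mul_cexp hs hsa).const_mul (-(π * s) * 2)) (fun x _ => ?_)
      measurableSet_Ioi
    simp only [Pi.mul_apply]
    ring
  have hzero : Tendsto ((fun x : ℝ => E (a * x)) * fun x : ℝ => cexp (-(π * s) * (x : ℂ) ^ 2))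
      (𝓝[>] 0) (𝓝 0) := by
    have hcont := (continuous_E_mul_ofReal a).mul
      (by fun_prop : Continuous fun x : ℝ => cexp (-(π * s) * (x : ℂ) ^ 2))
    simpa using (hcont.tendsto 0).mono_left nhdsWithin_le_nhds
  have hparts := integral_Ioi_mul_deriv_eq_deriv_mul
    (fun x _ => hasDerivAt_E_mul_ofReal a x) (fun x _ => hasDerivAt_cexp_neg_mul_sq (π * s) x)
    hint_mul_deriv (hderiv_mul ▸ hint_deriv_mul) hzero (tendsto_E_mul_cexp_atTop hs hsa)
  rw [hparts, sub_zero, zero_sub, ← integral_const_mul]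
  exact congrArg (fun f : ℝ → ℂ => -∫ x in Ioi 0, f x) hderiv_mul

lemma integral_Ioi_E_mul_sqrt_mul_cexp (hs : 0 < s.re) (hsa : 0 < (s + a ^ 2).re) :
    ∫ t in Ioi (0 : ℝ), E (a * √t) * cexp (-(π * s) * (t : ℂ))
      = a / (2 * π * s * (s + a ^ 2) ^ (1 / 2 : ℂ)) := by
  have hs0 : s ≠ 0 := by
    rintro rfl
    exact hs.ne' zero_re
  have hsubst : ∫ t in Ioi (0 : ℝ), E (a * √t) * cexp (-(π * s) * (t : ℂ))
      = ∫ x in Ioi (0 : ℝ), (-(π * s))⁻¹ *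
          (E (a * x) * (-(π * s) * (2 * (x : ℂ)) * cexp (-(π * s) * (x : ℂ) ^ 2))) := by
    rw [← integral_comp_rpow_Ioi_of_pos two_pos]
    refine setIntegral_congr_fun measurableSet_Ioi fun x (hx : 0 < x) => ?_
    have hsub : (2 : ℝ) - 1 = 1 := by norm_num
    simp only [hsub, Real.rpow_one, Real.rpow_two, Real.sqrt_sq hx.le, real_smul, ofReal_mul,
      ofReal_ofNat, ofReal_pow]
    field_simp
  rw [hsubst, integral_const_mul, integral_Ioi_E_mul_deriv_cexp hs hsa,
    integral_Ioi_cexp_neg_pi_mul_sq hsa, inv_neg, neg_mul_neg]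
  simp only [div_eq_mul_inv, mul_inv]
  ring

end ErrorFunction

section QuadraticForm

variable {n : Type*} [Fintype n]

/-- The form `Q_A(v) = ½ vᵀAv` in any dimension; `Qc` is the case `n = Fin 2`. -/
noncomputable def halfQuadForm (A : Matrix n n ℂ) (v : n → ℂ) : ℂ :=
  (1 / 2) * (v ⬝ᵥ A *ᵥ v)

lemma halfQuadForm_sub_smul_vecMulVec_self (A : Matrix n n ℂ) (k : ℂ) (w v : n → ℂ) :
    halfQuadForm (A - k • vecMulVec w w) v = halfQuadForm A v - k / 2 * (w ⬝ᵥ v) ^ 2 := by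
  simp only [halfQuadForm, sub_mulVec, smul_mulVec, vecMulVec_mulVec, dotProduct_sub,
    dotProduct_smul, smul_eq_mul, op_smul_eq_smul, dotProduct_comm v w]
  ring

lemma halfQuadForm_map_ofReal (A : Matrix n n ℝ) (v : n → ℝ) :
    halfQuadForm (A.map ofReal) (fun i => (v i : ℂ)) = ((1 / 2 * (v ⬝ᵥ A *ᵥ v) : ℝ) : ℂ) := by
  simp [halfQuadForm, dotProduct, mulVec]

lemma sq_sqrt_neg_eq_neg_halfQuadForm_map_ofReal {A : Matrix n n ℝ} {v : n → ℝ}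
    (h : v ⬝ᵥ A *ᵥ v ≤ 0) :
    (√(-(1 / 2 * (v ⬝ᵥ A *ᵥ v))) : ℂ) ^ 2
      = -halfQuadForm (A.map ofReal) (fun i => (v i : ℂ)) := by
  rw [← ofReal_pow, Real.sq_sqrt (by linarith), ofReal_neg, halfQuadForm_map_ofReal]

lemma neg_two_I_mul_halfQuadForm_sub_smul_vecMulVec {M : Matrix n n ℂ} (hM : M.IsSymm)
    (Ω : Matrix n n ℂ) (c v : n → ℂ) {r : ℂ} (hr : r ^ 2 = -halfQuadForm M c) :
    -2 * I * halfQuadForm (Ω - (I / halfQuadForm M c) • vecMulVec (M *ᵥ c) (M *ᵥ c)) v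
      = -2 * I * halfQuadForm Ω v + (c ⬝ᵥ M *ᵥ v / r) ^ 2 := by
  have hpair : M *ᵥ c ⬝ᵥ v = c ⬝ᵥ M *ᵥ v := by
    rw [dotProduct_mulVec, ← mulVec_transpose, hM.eq]
  rw [halfQuadForm_sub_smul_vecMulVec_self, hpair, div_pow, hr]
  simp only [div_eq_mul_inv, inv_neg]
  linear_combination (c ⬝ᵥ M *ᵥ v) ^ 2 * (halfQuadForm M c)⁻¹ * I_sq

theorem stmt_6_general {M Ω : Matrix n n ℂ} (hM : M.IsSymm) {c v : n → ℂ}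
    (_hc : halfQuadForm M c ≠ 0) {r : ℂ} (hr : r ^ 2 = -halfQuadForm M c) {Λ : Matrix n n ℂ}
    (hΛ : Λ = Ω - (I / halfQuadForm M c) • vecMulVec (M *ᵥ c) (M *ᵥ c))
    (hΩv : 0 < (halfQuadForm Ω v).im) (hΛv : 0 < (-2 * I * halfQuadForm Λ v).re) :
    -∫ t in Ioi (0 : ℝ),
        E (c ⬝ᵥ M *ᵥ v * √t / r) * cexp (2 * π * I * halfQuadForm Ω v * t)
      = c ⬝ᵥ M *ᵥ v /
          (4 * π * I * r * halfQuadForm Ω v * (-2 * I * halfQuadForm Λ v) ^ (1 / 2 : ℂ)) := by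
  have hre : 0 < (-2 * I * halfQuadForm Ω v).re := by simpa using hΩv
  rw [hΛ, neg_two_I_mul_halfQuadForm_sub_smul_vecMulVec hM Ω c v hr] at hΛv ⊢
  have hintegrand : ∀ t : ℝ,
      E (c ⬝ᵥ M *ᵥ v * √t / r) * cexp (2 * π * I * halfQuadForm Ω v * t)
        = E (c ⬝ᵥ M *ᵥ v / r * √t) * cexp (-(π * (-2 * I * halfQuadForm Ω v)) * t) := by
    intro t
    ring_nf
  simp_rw [hintegrand, integral_Ioi_E_mul_sqrt_mul_cexp hre hΛv]
  simp only [div_eq_mul_inv, mul_inv]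
  ring

end QuadraticForm

/-- **Corollary (formula for `κ_Ω^c(v)`).**
With `M` real symmetric, `Im Ω = M`, `cᵀMc < 0`, `Λ = Ω - (i/Q_M(c))·(Mc)(Mc)ᵀ`,
`Im(Q_Ω(v)) > 0` and `Re(-2i·Q_Λ(v)) > 0`, we have
`-∫₀^∞ E(cᵀMv·√t / √(-½cᵀMc))·e(Q_Ω(v)t) dt
  = cᵀMv / (4πi·√(-Q_M(c))·Q_Ω(v)·(-2i·Q_Λ(v))^{1/2})`. -/
theorem stmt_6 (M : Matrix (Fin 2) (Fin 2) ℝ) (hM : M.IsSymm)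
    (Ω : Matrix (Fin 2) (Fin 2) ℂ) (hΩ : Ω.IsSymm)
    (hIm : ∀ i j, (Ω i j).im = M i j)
    (c : Fin 2 → ℝ) (hc : c ⬝ᵥ M.mulVec c < 0)
    (v : Fin 2 → ℂ)
    (Λ : Matrix (Fin 2) (Fin 2) ℂ)
    (hΛ : Λ = Ω - (Complex.I / Qc (M.map Complex.ofReal) (fun i => (c i : ℂ))) •
      Matrix.vecMulVec ((M.map Complex.ofReal).mulVec fun i => (c i : ℂ))
        ((M.map Complex.ofReal).mulVec fun i => (c i : ℂ)))
    (h1 : 0 < (Qc Ω v).im)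
    (h2 : 0 < (-2 * Complex.I * Qc Λ v).re) :
    -∫ t in Set.Ioi (0 : ℝ),
        E (((fun i => (c i : ℂ)) ⬝ᵥ (M.map Complex.ofReal).mulVec v) * (Real.sqrt t : ℂ) /
            (Real.sqrt (-(1 / 2) * (c ⬝ᵥ M.mulVec c)) : ℂ)) *
          Complex.exp (2 * (Real.pi : ℂ) * Complex.I * Qc Ω v * (t : ℂ))
      = ((fun i => (c i : ℂ)) ⬝ᵥ (M.map Complex.ofReal).mulVec v) /
          (4 * (Real.pi : ℂ) * Complex.I * (Real.sqrt (-((1 / 2) * (c ⬝ᵥ M.mulVec c))) : ℂ) *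
            Qc Ω v * (-2 * Complex.I * Qc Λ v) ^ ((1 : ℂ) / 2)) := by
  have hQ : halfQuadForm (M.map ofReal) (fun i => (c i : ℂ)) ≠ 0 := by
    rw [halfQuadForm_map_ofReal]
    exact ofReal_ne_zero.2 (by linarith)
  rw [neg_mul]
  exact stmt_6_general (hM.map _) hQ (sq_sqrt_neg_eq_neg_halfQuadForm_map_ofReal hc.le) hΛ h1 h2
end

section
/- Let M and N be real symmetric 2×2 matrices with det M < 0 (so M has signature (1,1)), let Ω = iM + N with (1,1)-entry ω₁₁, and let c₁, c₂ ∈ ℝ² with c₁ᵀMc₁ < 0 and c₂ᵀMc₂ < 0 lie in the same connected component of the cone {c ∈ ℝ² : cᵀMc < 0}. Let p₁ ∈ ℝ and s ∈ ℂ with Re s > 1/2. Then ∫₀^∞ ( Σ_{n∈ℤ, n≠0} ρ_M^{c₁,c₂}((n√t, 0)ᵀ) · e(½ω₁₁n²t + p₁n) ) · t^{s-1} dt = (Li_{2s}(e(p₁)) - Li_{2s}(e(-p₁))) · ∫₀^∞ ρ_M^{c₁,c₂}((√t, 0)ᵀ) · e(½ω₁₁t) · t^{s-1} dt, where Li_w(z)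 := Σ_{n=1}^∞ z^n/n^w (convergent here since |e(±p₁)| = 1 and Re(2s) > 1). -/
open Matrix

/-- `e(z) := exp(2πiz)`. -/
noncomputable def ec (z : ℂ) : ℂ := Complex.exp (2 * (Real.pi : ℂ) * Complex.I * z)

/-- `ρ_M^c(v) := E(cᵀMv / √(-½cᵀMc))`. -/
noncomputable def rho (M : Matrix (Fin 2) (Fin 2) ℝ) (c : Fin 2 → ℝ) (v : Fin 2 → ℂ) : ℂ :=
  E (((fun i => (c i : ℂ)) ⬝ᵥ (M.map Complex.ofReal).mulVec v) /
      (Real.sqrt (-(1 / 2) * (c ⬝ᵥ M.mulVec c)) : ℂ))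

/-- `Li_w(z) := Σ_{n=1}^∞ z^n/n^w`, the polylogarithm (principal powers). -/
noncomputable def Li (w z : ℂ) : ℂ := ∑' n : ℕ, z ^ (n + 1) / ((n : ℂ) + 1) ^ w

/-!
Put `F x = ρ_M^{c₁,c₂}((x, 0)ᵀ) e(½ω₁₁x²)`, an odd function of `x`. After the substitution `x = √t`,
the theorem computes the Mellin transform at `w = 2s` of `∑_{n ≠ 0} F (n x) e(p₁)ⁿ`. Integrating
term by term, `F (n x) = sign n · F (|n| x)` contributes `sign n · |n|^{-w} · e(p₁)ⁿ` times the
Mellin transform of `F`, and the terms with `n > 0` and `n < 0` add up to the two polylogarithms.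

This needs the Mellin integral of `F` to converge. Let `κ(c)` be the slope with
`ρ_M^c((x, 0)ᵀ) = E(κ(c) x)`. Then `|F x| = |x ∫ exp(-πx²(u² + M₁₁)) du|`, with `u` running from
`κ(c₁)` to `κ(c₂)`. As `c₁` and `c₂` lie in one component of the negative cone, each such `u` is
`κ(c)` for some `c` in the cone. With `B(c, v) = cᵀMv` and `Q(v) = B(v, v)`, positivity of
`κ(c)² + M₁₁` at `v = (1, 0)ᵀ` is that of `2B(c, v)² - Q(c)Q(v) = B(c, v)² - det M · det(c, v)²`.
-/

section MellinTransform

open MeasureTheory Set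

variable {V : Type*} [NormedAddCommGroup V] [NormedSpace ℂ V]

lemma mellin_comp_sqrt (f : ℝ → V) (s : ℂ) :
    mellin (fun t => f √t) s = (2 : ℂ) • mellin f (2 * s) := by
  simp_rw [Real.sqrt_eq_rpow, mellin_comp_rpow]
  rw [← Complex.coe_smul]
  congr 2
  · norm_num
  · push_cast
    ring

lemma integral_norm_cpow_smul_comp_mul_left (f : ℝ → V) (s : ℂ) {a : ℝ} (ha : 0 < a) :
    ∫ t in Ioi (0 : ℝ), ‖(t : ℂ) ^ (s - 1) • f (a * t)‖ =
      a ^ (-s.re) * ∫ t in Ioi (0 : ℝ), ‖(t : ℂ) ^ (s - 1) • f t‖ := by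
  have hscale : EqOn (fun t : ℝ => ‖(t : ℂ) ^ (s - 1) • f (a * t)‖)
      (fun t : ℝ => a ^ (1 - s.re) * ‖((a * t : ℝ) : ℂ) ^ (s - 1) • f (a * t)‖) (Ioi 0) := by
    intro t (ht : 0 < t)
    simp only [norm_smul, Complex.norm_cpow_eq_rpow_re_of_pos ht,
      Complex.norm_cpow_eq_rpow_re_of_pos (mul_pos ha ht), Real.mul_rpow ha.le ht.le,
      ← mul_assoc, ← Real.rpow_add ha]
    simp
  rw [setIntegral_congr_fun measurableSet_Ioi hscale, integral_const_mul,
    integral_comp_mul_left_Ioi (fun t : ℝ => ‖(t : ℂ) ^ (s - 1) • f t‖) 0 ha, mul_zero,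
    smul_eq_mul, ← mul_assoc, ← Real.rpow_neg_one, ← Real.rpow_add ha]
  congr 2
  ring

lemma hasSum_mellin_comp_mul_left {ι : Type*} [Countable ι] {f : ℝ → V} {s : ℂ}
    (hf : MellinConvergent f s) {a : ι → ℂ} {r : ι → ℝ} (hr : ∀ i, 0 < r i)
    (hsum : Summable fun i => ‖a i‖ * r i ^ (-s.re)) :
    HasSum (fun i => (a i * (r i : ℂ) ^ (-s)) • mellin f s)
      (mellin (fun t => ∑' i, a i • f (r i * t)) s) := by
  have hterm (i : ι) : MellinConvergent (fun t => a i • f (r i * t)) s :=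
    ((MellinConvergent.comp_mul_left (hr i)).2 hf).const_smul (a i)
  have hnorm (i : ι) : ∫ t in Ioi (0 : ℝ), ‖(t : ℂ) ^ (s - 1) • a i • f (r i * t)‖ =
      ‖a i‖ * r i ^ (-s.re) * ∫ t in Ioi (0 : ℝ), ‖(t : ℂ) ^ (s - 1) • f t‖ := by
    simp_rw [smul_comm _ (a i), norm_smul (a i)]
    rw [integral_const_mul, integral_norm_cpow_smul_comp_mul_left f s (hr i), mul_assoc]
  have hint := hasSum_integral_of_summable_integral_norm hterm
    ((hsum.mul_right _).congr fun i => (hnorm i).symm)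
  convert hint using 1
  · funext i
    rw [mul_smul, ← mellin_comp_mul_left f s (hr i), ← mellin_const_smul]
    rfl
  · simp only [mellin, tsum_const_smul'']

lemma mellinConvergent_of_norm_le_rpow_mul_exp_neg_mul_sq {f : ℝ → V} {s : ℂ} {a C δ : ℝ}
    (hf : AEStronglyMeasurable f (volume.restrict (Ioi 0))) (hδ : 0 < δ)
    (hbound : ∀ x > 0, ‖f x‖ ≤ C * (x ^ a * Real.exp (-δ * x ^ 2))) (hs : -a < s.re) :
    MellinConvergent f s := by
  have hdom : IntegrableOn (fun x : ℝ => x ^ (s.re - 1 + a) * Real.exp (-δ * x ^ 2)) (Ioi 0) :=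
    integrableOn_rpow_mul_exp_neg_mul_sq hδ (by linarith)
  have hcpow : ContinuousOn (fun x : ℝ => (x : ℂ) ^ (s - 1)) (Ioi 0) := fun x hx =>
    (Complex.continuousAt_ofReal_cpow_const x (s - 1) (Or.inr (ne_of_gt hx))).continuousWithinAt
  refine (hdom.const_mul C).mono' ((hcpow.aestronglyMeasurable measurableSet_Ioi).smul hf) ?_
  refine ae_restrict_of_forall_mem measurableSet_Ioi fun x (hx : 0 < x) => ?_
  calc ‖(x : ℂ) ^ (s - 1) • f x‖
      = x ^ (s.re - 1) * ‖f x‖ := by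
        rw [norm_smul, Complex.norm_cpow_eq_rpow_re_of_pos hx, Complex.sub_re, Complex.one_re]
    _ ≤ x ^ (s.re - 1) * (C * (x ^ a * Real.exp (-δ * x ^ 2))) := by
        gcongr
        exact hbound x hx
    _ = C * (x ^ (s.re - 1 + a) * Real.exp (-δ * x ^ 2)) := by
        rw [Real.rpow_add hx]
        ring

end MellinTransform

section OddTheta

lemma hasSum_Li {w z : ℂ} (hz : ‖z‖ ≤ 1) (hw : 1 < w.re) :
    HasSum (fun n : ℕ => z ^ (n + 1) / ((n : ℂ) + 1) ^ w) (Li w z) := by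
  have hzeta : Summable fun n : ℕ => 1 / ((n + 1 : ℕ) : ℝ) ^ w.re :=
    (summable_nat_add_iff 1).2 (Real.summable_one_div_nat_rpow.2 hw)
  refine (hzeta.of_norm_bounded fun n => ?_).hasSum
  have hcast : (n : ℂ) + 1 = ((n + 1 : ℕ) : ℂ) := by push_cast; rfl
  rw [norm_div, norm_pow, hcast, Complex.norm_natCast_cpow_of_pos n.succ_pos]
  gcongr
  exact pow_le_one₀ (norm_nonneg z) hz

lemma hasSum_sign_mul_zpow_mul_abs_cpow {w z : ℂ} (hz : ‖z‖ = 1) (hw : 1 < w.re) :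
    HasSum (fun n : ℤ => (n.sign : ℂ) * z ^ n * ((|(n : ℝ)| : ℝ) : ℂ) ^ (-w))
      (Li w z - Li w z⁻¹) := by
  set f : ℤ → ℂ := fun n => (n.sign : ℂ) * z ^ n * ((|(n : ℝ)| : ℝ) : ℂ) ^ (-w) with hf
  have habs (k : ℕ) : |(k : ℝ) + 1| = k + 1 := abs_of_nonneg (by positivity)
  have hsign (k : ℕ) : ((k : ℤ) + 1).sign = 1 := Int.sign_eq_one_of_pos (by positivity)
  have hzpow (k : ℕ) : z ^ ((k : ℤ) + 1) = z ^ (k + 1) := mod_cast zpow_natCast z (k + 1)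
  have hf_pos (k : ℕ) : f (k + 1) = z ^ (k + 1) / ((k : ℂ) + 1) ^ w := by
    simp [hf, hsign, habs, hzpow, Complex.cpow_neg, div_eq_mul_inv]
  have hf_neg (k : ℕ) : f (-(k + 1)) = -(z⁻¹ ^ (k + 1) / ((k : ℂ) + 1) ^ w) := by
    simp only [hf, Int.sign_neg, hsign, _root_.zpow_neg, hzpow, Int.cast_neg, abs_neg]
    simp [habs, Complex.cpow_neg, div_eq_mul_inv]
  have hf_zero : f 0 = 0 := by simp [hf]
  have hpos : HasSum (fun k : ℕ => f (k + 1)) (Li w z) := by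
    simpa only [hf_pos] using hasSum_Li hz.le hw
  have hneg : HasSum (fun k : ℕ => f (-(k + 1))) (-Li w z⁻¹) := by
    simpa only [hf_neg] using (hasSum_Li (by rw [norm_inv, hz, inv_one]) hw).neg
  simpa only [hf_zero, add_zero, ← sub_eq_add_neg] using hpos.of_add_one_of_neg_add_one hneg

lemma apply_int_mul_of_odd {F : ℝ → ℂ} (hF : F.Odd) (n : ℤ) (x : ℝ) :
    F (n * x) = n.sign * F (|(n : ℝ)| * x) := by
  rcases lt_trichotomy n 0 with hn | rfl | hn
  · have hn' : (n : ℝ) < 0 := mod_cast hn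
    rw [abs_of_neg hn', Int.sign_eq_neg_one_of_neg hn, neg_mul, hF]
    simp
  · simp [hF.map_zero]
  · have hn' : (0 : ℝ) < n := mod_cast hn
    simp [abs_of_pos hn', Int.sign_eq_one_of_pos hn]

theorem mellin_tsum_odd_comp_int_mul {F : ℝ → ℂ} {w z : ℂ} (hF : F.Odd)
    (hconv : MellinConvergent F w) (hw : 1 < w.re) (hz : ‖z‖ = 1) :
    mellin (fun x => ∑' n : {n : ℤ // n ≠ 0}, F ((n : ℤ) * x) * z ^ (n : ℤ)) w =
      (Li w z - Li w z⁻¹) * mellin F w := by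
  have hsummable : Summable fun n : {n : ℤ // n ≠ 0} =>
      ‖((n : ℤ).sign : ℂ) * z ^ (n : ℤ)‖ * |((n : ℤ) : ℝ)| ^ (-w.re) := by
    refine ((Real.summable_abs_int_rpow hw).subtype {n | n ≠ 0}).congr fun n => ?_
    rcases lt_or_gt_of_ne n.2 with hn | hn <;> 
      simp [hz, Int.sign_eq_neg_one_of_neg, Int.sign_eq_one_of_pos, hn]
  have hmellin := hasSum_mellin_comp_mul_left hconv
    (fun n : {n : ℤ // n ≠ 0} => abs_pos.2 (Int.cast_ne_zero.2 n.2)) hsummable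
  have hsupport : Function.support (fun n : ℤ =>
      (n.sign : ℂ) * z ^ n * ((|(n : ℝ)| : ℝ) : ℂ) ^ (-w)) ⊆ {n | n ≠ 0} := by
    rintro n hn rfl
    simp at hn
  have hLi := (hasSum_subtype_iff_of_support_subset hsupport).2
    (hasSum_sign_mul_zpow_mul_abs_cpow hz hw)
  rw [← smul_eq_mul, (hLi.smul_const (mellin F w)).unique hmellin]
  congr 1
  funext x
  refine tsum_congr fun n => ?_
  rw [apply_int_mul_of_odd hF, smul_eq_mul, mul_right_comm]

theorem mellin_tsum_odd_comp_int_mul_sqrt {F : ℝ → ℂ} {s z : ℂ} (hF : F.Odd)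
    (hconv : MellinConvergent F (2 * s)) (hs : 1 / 2 < s.re) (hz : ‖z‖ = 1) :
    mellin (fun t => ∑' n : {n : ℤ // n ≠ 0}, F ((n : ℤ) * √t) * z ^ (n : ℤ)) s =
      (Li (2 * s) z - Li (2 * s) z⁻¹) * mellin (fun t => F √t) s := by
  have hw : 1 < (2 * s).re := by
    have hre : (2 * s).re = 2 * s.re := by simp
    linarith
  rw [mellin_comp_sqrt F, mellin_comp_sqrt
      (fun x => ∑' n : {n : ℤ // n ≠ 0}, F ((n : ℤ) * x) * z ^ (n : ℤ)),
    mellin_tsum_odd_comp_int_mul hF hconv hw hz, smul_eq_mul, smul_eq_mul, mul_left_comm]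

end OddTheta

section ErrorFunction

open MeasureTheory Set

lemma ec_add (a b : ℂ) : ec (a + b) = ec a * ec b := by
  rw [ec, mul_add, Complex.exp_add, ec, ec]

lemma ec_neg (z : ℂ) : ec (-z) = (ec z)⁻¹ := by
  rw [ec, mul_neg, Complex.exp_neg, ec]

lemma ec_mul_intCast (z : ℂ) (n : ℤ) : ec (z * n) = ec z ^ n := by
  rw [ec, ec, ← Complex.exp_int_mul]
  congr 1
  ring

lemma norm_ec (z : ℂ) : ‖ec z‖ = Real.exp (-(2 * Real.pi * z.im)) := by
  simp [ec, Complex.norm_exp]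

lemma continuous_ec : Continuous ec := by
  unfold ec
  fun_prop

lemma E_neg (z : ℂ) : E (-z) = -E z := by
  simp only [E, neg_sq, neg_mul, intervalIntegral.integral_neg]

lemma continuous_E : Continuous E :=
  intervalIntegral.continuous_parametric_intervalIntegral_of_continuous' (by fun_prop) 0 1

lemma E_ofReal_mul (k x : ℝ) :
    E ((k * x : ℝ) : ℂ) =
      ((x * ∫ u in (0 : ℝ)..k, Real.exp (-Real.pi * x ^ 2 * u ^ 2) : ℝ) : ℂ) := by
  have hsubst := intervalIntegral.mul_integral_comp_mul_left (a := 0) (b := 1)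
    (f := fun u : ℝ => Real.exp (-Real.pi * x ^ 2 * u ^ 2)) k
  rw [mul_zero, mul_one] at hsubst
  rw [← hsubst, ← mul_assoc, ← intervalIntegral.integral_const_mul,
    ← intervalIntegral.integral_ofReal, E]
  congr 1
  funext t
  push_cast
  ring_nf

lemma norm_E_mul_sub_E_mul_le {k₁ k₂ ν : ℝ} (hν : ∀ u ∈ uIcc k₁ k₂, ν ≤ u ^ 2) (x : ℝ) :
    ‖E ((k₂ * x : ℝ) : ℂ) - E ((k₁ * x : ℝ) : ℂ)‖ ≤
      |x| * (Real.exp (-Real.pi * x ^ 2 * ν) * |k₂ - k₁|) := by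
  have hint (a b : ℝ) :
      IntervalIntegrable (fun u : ℝ => Real.exp (-Real.pi * x ^ 2 * u ^ 2)) volume a b :=
    Continuous.intervalIntegrable (by fun_prop) a b
  rw [E_ofReal_mul, E_ofReal_mul, ← Complex.ofReal_sub, Complex.norm_real, ← mul_sub,
    intervalIntegral.integral_interval_sub_left (hint _ _) (hint _ _), norm_mul, Real.norm_eq_abs]
  gcongr
  refine intervalIntegral.norm_integral_le_of_norm_le_const fun u hu => ?_
  rw [Real.norm_eq_abs, Real.abs_exp, Real.exp_le_exp]
  have := hν u (uIoc_subset_uIcc hu)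
  nlinarith [mul_nonneg Real.pi_pos.le (sq_nonneg x)]

end ErrorFunction

section NegativeCone

variable {M : Matrix (Fin 2) (Fin 2) ℝ}

lemma sq_dotProduct_mulVec_sub {R : Type*} [CommRing R] {M : Matrix (Fin 2) (Fin 2) R}
    (hM : M.IsSymm) (c v : Fin 2 → R) :
    (c ⬝ᵥ M *ᵥ v) ^ 2 - (c ⬝ᵥ M *ᵥ c) * (v ⬝ᵥ M *ᵥ v) =
      -M.det * (c 0 * v 1 - c 1 * v 0) ^ 2 := by
  simp only [dotProduct, mulVec, Fin.sum_univ_two, det_fin_two, hM.apply 0 1]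
  ring

lemma eq_zero_of_dotProduct_mulVec_eq_zero {K : Type*} [Field K] {M : Matrix (Fin 2) (Fin 2) K}
    {c v : Fin 2 → K} (hc : c ⬝ᵥ M *ᵥ c ≠ 0) (hcv : c ⬝ᵥ M *ᵥ v = 0)
    (hpar : c 0 * v 1 - c 1 * v 0 = 0) : v = 0 := by
  have hv (i : Fin 2) : v i * (c ⬝ᵥ M *ᵥ c) = c i * (c ⬝ᵥ M *ᵥ v) := by
    fin_cases i <;>
      simp only [dotProduct, mulVec, Fin.sum_univ_two, Fin.zero_eta, Fin.mk_one]
    · linear_combination (-(c 0 * M 0 1 + c 1 * M 1 1)) * hpar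
    · linear_combination (c 0 * M 0 0 + c 1 * M 1 0) * hpar
  funext i
  have hvi := hv i
  rw [hcv, mul_zero] at hvi
  exact (mul_eq_zero.1 hvi).resolve_right hc

/-- The real number `κ` with `ρ_M^c(x v) = E(κ x)`, for a fixed real direction `v`. -/
noncomputable def rhoSlope (M : Matrix (Fin 2) (Fin 2) ℝ) (c v : Fin 2 → ℝ) : ℝ :=
  (c ⬝ᵥ M *ᵥ v) / √(-(1 / 2) * (c ⬝ᵥ M *ᵥ c))

lemma rho_vecCons_zero (M : Matrix (Fin 2) (Fin 2) ℝ) (c : Fin 2 → ℝ) (x : ℝ) :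
    rho M c ![(x : ℂ), 0] = E ((rhoSlope M c ![1, 0] * x : ℝ) : ℂ) := by
  unfold rho rhoSlope
  congr 1
  simp only [dotProduct, mulVec, Fin.sum_univ_two, map_apply, cons_val_zero, cons_val_one]
  push_cast
  ring

lemma sq_rhoSlope_add_pos (hM : M.IsSymm) (hdet : M.det < 0) {c v : Fin 2 → ℝ}
    (hc : c ⬝ᵥ M *ᵥ c < 0) (hv : v ≠ 0) : 0 < rhoSlope M c v ^ 2 + v ⬝ᵥ M *ᵥ v := by
  have hnum : 0 < 2 * (c ⬝ᵥ M *ᵥ v) ^ 2 - (c ⬝ᵥ M *ᵥ c) * (v ⬝ᵥ M *ᵥ v) := by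
    have hCS := sq_dotProduct_mulVec_sub hM c v
    by_cases hcv : c ⬝ᵥ M *ᵥ v = 0
    · have hpar : c 0 * v 1 - c 1 * v 0 ≠ 0 := fun h =>
        hv (eq_zero_of_dotProduct_mulVec_eq_zero hc.ne hcv h)
      nlinarith [sq_pos_of_ne_zero hpar]
    · nlinarith [sq_pos_of_ne_zero hcv, sq_nonneg (c 0 * v 1 - c 1 * v 0)]
  have heq : rhoSlope M c v ^ 2 + v ⬝ᵥ M *ᵥ v =
      (2 * (c ⬝ᵥ M *ᵥ v) ^ 2 - (c ⬝ᵥ M *ᵥ c) * (v ⬝ᵥ M *ᵥ v)) / -(c ⬝ᵥ M *ᵥ c) := by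
    rw [rhoSlope, div_pow, Real.sq_sqrt (by linarith)]
    have hne := hc.ne
    field_simp
    ring
  rw [heq]
  exact div_pos hnum (neg_pos.2 hc)

lemma continuousOn_rhoSlope (M : Matrix (Fin 2) (Fin 2) ℝ) (v : Fin 2 → ℝ) :
    ContinuousOn (fun c => rhoSlope M c v) {c | c ⬝ᵥ M *ᵥ c < 0} := by
  refine ContinuousOn.div (by fun_prop) (by fun_prop) fun c hc => ?_
  have hneg : c ⬝ᵥ M *ᵥ c < 0 := hc
  exact (Real.sqrt_pos.2 (by linarith)).ne'

lemma sq_add_pos_of_mem_uIcc_rhoSlope (hM : M.IsSymm) (hdet : M.det < 0) {T : Set (Fin 2 → ℝ)}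
    (hT : IsPreconnected T) (hcone : T ⊆ {c | c ⬝ᵥ M *ᵥ c < 0}) {c₁ c₂ v : Fin 2 → ℝ}
    (h₁ : c₁ ∈ T) (h₂ : c₂ ∈ T) (hv : v ≠ 0) :
    ∀ u ∈ Set.uIcc (rhoSlope M c₁ v) (rhoSlope M c₂ v), 0 < u ^ 2 + v ⬝ᵥ M *ᵥ v := by
  intro u hu
  have himage := hT.image _ ((continuousOn_rhoSlope M v).mono hcone)
  obtain ⟨c, hc, rfl⟩ := himage.ordConnected.uIcc_subset ⟨c₁, h₁, rfl⟩ ⟨c₂, h₂, rfl⟩ hu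
  exact sq_rhoSlope_add_pos hM hdet (hcone hc) hv

end NegativeCone

section ThetaKernel

variable {M : Matrix (Fin 2) (Fin 2) ℝ} {c₁ c₂ : Fin 2 → ℝ} {ω : ℂ}

/-- The function `x ↦ ρ_M^{c₁,c₂}((x, 0)ᵀ) e(½ωx²)`, whose values at `n√t` are, up to `e(p₁n)`, the
terms of the theta series. -/
noncomputable def thetaKernel (M : Matrix (Fin 2) (Fin 2) ℝ) (c₁ c₂ : Fin 2 → ℝ) (ω : ℂ)
    (x : ℝ) : ℂ :=
  (rho M c₂ ![(x : ℂ), 0] - rho M c₁ ![(x : ℂ), 0]) * ec ((1 / 2) * ω * (x : ℂ) ^ 2)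

lemma odd_thetaKernel : (thetaKernel M c₁ c₂ ω).Odd := by
  intro x
  simp only [thetaKernel, rho_vecCons_zero]
  simp only [mul_neg, Complex.ofReal_neg, E_neg, neg_sq]
  ring

lemma continuous_thetaKernel : Continuous (thetaKernel M c₁ c₂ ω) := by
  have hE (k : ℝ) : Continuous fun x : ℝ => E ((k * x : ℝ) : ℂ) :=
    continuous_E.comp (by fun_prop)
  have hec : Continuous fun x : ℝ => ec ((1 / 2) * ω * (x : ℂ) ^ 2) :=
    continuous_ec.comp (by fun_prop)
  unfold thetaKernel
  simp only [rho_vecCons_zero]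
  exact ((hE _).sub (hE _)).mul hec

lemma norm_thetaKernel_le {ν : ℝ}
    (hν : ∀ u ∈ Set.uIcc (rhoSlope M c₁ ![1, 0]) (rhoSlope M c₂ ![1, 0]), ν ≤ u ^ 2) (x : ℝ) :
    ‖thetaKernel M c₁ c₂ ω x‖ ≤ |rhoSlope M c₂ ![1, 0] - rhoSlope M c₁ ![1, 0]| *
      (|x| * Real.exp (-(Real.pi * (ν + ω.im)) * x ^ 2)) := by
  have hec : ‖ec ((1 / 2) * ω * (x : ℂ) ^ 2)‖ = Real.exp (-Real.pi * ω.im * x ^ 2) := by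
    have him : ((1 / 2 : ℂ) * ω).im = ω.im / 2 := by simp; ring
    rw [norm_ec, ← Complex.ofReal_pow, Complex.im_mul_ofReal, him]
    ring_nf
  rw [thetaKernel, rho_vecCons_zero, rho_vecCons_zero, norm_mul, hec]
  calc _ ≤ |x| * (Real.exp (-Real.pi * x ^ 2 * ν) *
          |rhoSlope M c₂ ![1, 0] - rhoSlope M c₁ ![1, 0]|) *
          Real.exp (-Real.pi * ω.im * x ^ 2) := by
        gcongr
        exact norm_E_mul_sub_E_mul_le hν x
    _ = |rhoSlope M c₂ ![1, 0] - rhoSlope M c₁ ![1, 0]| *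
          (|x| * (Real.exp (-Real.pi * x ^ 2 * ν) * Real.exp (-Real.pi * ω.im * x ^ 2))) := by ring
    _ = _ := by
        rw [← Real.exp_add]
        ring_nf

lemma mellinConvergent_thetaKernel {w : ℂ} (hw : -1 < w.re)
    (hpos : ∀ u ∈ Set.uIcc (rhoSlope M c₁ ![1, 0]) (rhoSlope M c₂ ![1, 0]), 0 < u ^ 2 + ω.im) :
    MellinConvergent (thetaKernel M c₁ c₂ ω) w := by
  obtain ⟨u₀, hu₀, hmin⟩ := isCompact_uIcc.exists_isMinOn Set.nonempty_uIcc
    (f := fun u : ℝ => u ^ 2) (by fun_prop)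
  have hbound (x : ℝ) (hx : x > 0) : ‖thetaKernel M c₁ c₂ ω x‖ ≤
      |rhoSlope M c₂ ![1, 0] - rhoSlope M c₁ ![1, 0]| *
        (x ^ (1 : ℝ) * Real.exp (-(Real.pi * (u₀ ^ 2 + ω.im)) * x ^ 2)) := by
    simpa only [Real.rpow_one, abs_of_pos hx] using norm_thetaKernel_le hmin x
  exact mellinConvergent_of_norm_le_rpow_mul_exp_neg_mul_sq
    continuous_thetaKernel.aestronglyMeasurable (mul_pos Real.pi_pos (hpos u₀ hu₀)) hbound hw

lemma thetaKernel_sqrt {t : ℝ} (ht : 0 ≤ t) :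
    thetaKernel M c₁ c₂ ω √t =
      (rho M c₂ ![(√t : ℂ), 0] - rho M c₁ ![(√t : ℂ), 0]) * ec ((1 / 2) * ω * (t : ℂ)) := by
  rw [thetaKernel, ← Complex.ofReal_pow, Real.sq_sqrt ht]

lemma thetaKernel_intCast_mul_sqrt_mul_zpow {t : ℝ} (ht : 0 ≤ t) (p : ℂ) (n : ℤ) :
    thetaKernel M c₁ c₂ ω (n * √t) * ec p ^ n =
      (rho M c₂ ![(n : ℂ) * (√t : ℂ), 0] - rho M c₁ ![(n : ℂ) * (√t : ℂ), 0]) *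
        ec ((1 / 2) * ω * (n : ℂ) ^ 2 * (t : ℂ) + p * (n : ℂ)) := by
  have hsq : (√t : ℂ) ^ 2 = t := by rw [← Complex.ofReal_pow, Real.sq_sqrt ht]
  rw [thetaKernel, Complex.ofReal_mul, Complex.ofReal_intCast, mul_pow, hsq, ec_add,
    ec_mul_intCast]
  ring_nf

end ThetaKernel

/-- **Mellin transform of the `n₂ = 0` part of the indefinite theta function.**
With `M` of signature `(1,1)`, `Ω = iM + N`, `c₁, c₂` in the same connected component of
the negative cone of `M`, `p₁ ∈ ℝ` and `Re s > 1/2`: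
`∫₀^∞ (Σ_{n≠0} ρ_M^{c₁,c₂}((n√t, 0)ᵀ)·e(½ω₁₁n²t + p₁n))·t^{s-1} dt
  = (Li_{2s}(e(p₁)) - Li_{2s}(e(-p₁)))·∫₀^∞ ρ_M^{c₁,c₂}((√t, 0)ᵀ)·e(½ω₁₁t)·t^{s-1} dt`. -/
theorem stmt_9 (M N : Matrix (Fin 2) (Fin 2) ℝ) (hMsymm : M.IsSymm) (hNsymm : N.IsSymm)
    (hdet : M.det < 0)
    (Ω : Matrix (Fin 2) (Fin 2) ℂ)
    (hΩ : Ω = Complex.I • M.map Complex.ofReal + N.map Complex.ofReal)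
    (c₁ c₂ : Fin 2 → ℝ) (hc₁ : c₁ ⬝ᵥ M.mulVec c₁ < 0) (hc₂ : c₂ ⬝ᵥ M.mulVec c₂ < 0)
    (hconn : c₂ ∈ connectedComponentIn {x : Fin 2 → ℝ | x ⬝ᵥ M.mulVec x < 0} c₁)
    (p₁ : ℝ) (s : ℂ) (hs : 1 / 2 < s.re) :
    ∫ t in Set.Ioi (0 : ℝ),
        (∑' n : {n : ℤ // n ≠ 0},
            (rho M c₂ ![((n : ℤ) : ℂ) * (Real.sqrt t : ℂ), 0] -
                rho M c₁ ![((n : ℤ) : ℂ) * (Real.sqrt t : ℂ), 0]) *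
              ec ((1 / 2) * Ω 0 0 * ((n : ℤ) : ℂ) ^ 2 * (t : ℂ) + (p₁ : ℂ) * ((n : ℤ) : ℂ))) *
          (t : ℂ) ^ (s - 1)
      = (Li (2 * s) (ec (p₁ : ℂ)) - Li (2 * s) (ec (-(p₁ : ℂ)))) *
          ∫ t in Set.Ioi (0 : ℝ),
            (rho M c₂ ![(Real.sqrt t : ℂ), 0] - rho M c₁ ![(Real.sqrt t : ℂ), 0]) *
              ec ((1 / 2) * Ω 0 0 * (t : ℂ)) * (t : ℂ) ^ (s - 1) := by
  have him : (Ω 0 0).im = ![1, 0] ⬝ᵥ M *ᵥ ![1, 0] := by simp [hΩ]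
  have hpos := sq_add_pos_of_mem_uIcc_rhoSlope (v := ![1, 0]) hMsymm hdet
    isPreconnected_connectedComponentIn (connectedComponentIn_subset _ _)
    (mem_connectedComponentIn hc₁) hconn (by simp)
  have hre : (2 * s).re = 2 * s.re := by simp
  have hconv : MellinConvergent (thetaKernel M c₁ c₂ (Ω 0 0)) (2 * s) :=
    mellinConvergent_thetaKernel (by linarith) (him ▸ hpos)
  calc _ = mellin (fun t => ∑' n : {n : ℤ // n ≠ 0},
          thetaKernel M c₁ c₂ (Ω 0 0) ((n : ℤ) * √t) * ec p₁ ^ (n : ℤ)) s := by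
        refine MeasureTheory.setIntegral_congr_fun measurableSet_Ioi fun t (ht : 0 < t) => ?_
        simp only [thetaKernel_intCast_mul_sqrt_mul_zpow ht.le, smul_eq_mul, mul_comm]
    _ = (Li (2 * s) (ec p₁) - Li (2 * s) (ec (-p₁))) *
          mellin (fun t => thetaKernel M c₁ c₂ (Ω 0 0) √t) s := by
        rw [ec_neg]
        exact mellin_tsum_odd_comp_int_mul_sqrt odd_thetaKernel hconv hs (by simp [norm_ec])
    _ = _ := by
        congr 1
        refine MeasureTheory.setIntegral_congr_fun measurableSet_Ioi fun t (ht : 0 < t) => ?_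
        simp only [thetaKernel_sqrt ht.le, smul_eq_mul, mul_comm]
end
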